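/- Let A be a C*-algebra and suppose J ⋐ I is a compact containment of closed two-sided ideals in A, and a ∈ I is a full positive element (I is the closed ideal generated by a). Then there exists λ > 0 such that for all ideals K₁ ⊊ K₂ ⊆ J, the image of a in A/K₂^{K₁} has norm at least λ, where K₂^{K₁} = { x ∈ A : xK₂ ∪ K₂x ⊆ K₁ }. -/

import Mathlib

/-- A subset of a C*-algebra is a closed two-sided ideal. -/
def IsClosedTwoSidedIdeal {A : Type*} [NonUnitalCStarAlgebra A] (S : Set A) : Prop :=
  IsClosed S ∧ (0 : A) ∈ S ∧ (∀ x ∈ S, ∀ y ∈ S, x + y ∈ S) ∧ (∀ x ∈ S, -x ∈ S) ∧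
    (∀ a : A, ∀ x ∈ S, a * x ∈ S ∧ x * a ∈ S)

/-- For nested ideals `J ⊆ I` of `A`, the set `I^J = {x ∈ A : xI ⊆ J and Ix ⊆ J}`. -/
def relIdeal {A : Type*} [NonUnitalCStarAlgebra A] (I J : Set A) : Set A :=
  {x : A | ∀ a ∈ I, x * a ∈ J ∧ a * x ∈ J}

/-- The smallest closed two-sided ideal of `A` containing `a`. -/
def closedIdealGen {A : Type*} [NonUnitalCStarAlgebra A] (a : A) : Set A :=
  ⋂₀ {S : Set A | IsClosedTwoSidedIdeal S ∧ a ∈ S}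

/-- `J` is compactly contained in `I`: whenever `I` is contained in the closed sum of a
family of closed two-sided ideals, `J` is contained in a finite subsum. -/
def IsCompactlyContained {A : Type*} [NonUnitalCStarAlgebra A] (J I : Set A) : Prop :=
  ∀ {ι : Type*} (K : ι → Set A), (∀ l, IsClosedTwoSidedIdeal (K l)) →
    I ⊆ closure {x : A | ∃ (s : Finset ι) (f : ι → A),
        (∀ l ∈ s, f l ∈ K l) ∧ x = ∑ l ∈ s, f l} →
    ∃ s : Finset ι, J ⊆ {x : A | ∃ f : ι → A, (∀ l ∈ s, f l ∈ K l) ∧ x = ∑ l ∈ s, f l}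

lemma aux_key {A : Type*} [NonUnitalCStarAlgebra A] [PartialOrder A] [StarOrderedRing A]
    (x : A) (g : ℝ → ℝ) (hgc : Continuous g) (hg0 : g 0 = 0) :
    star (x - x * (star x * x) * cfcₙ g (star x * x)) *
      (x - x * (star x * x) * cfcₙ g (star x * x))
      = cfcₙ (fun t : ℝ => (t - t * t * g t) - (g t * t * t - g t * t * (t * t * g t)))
        (star x * x) := by
  obtain ⟨y, hy⟩ : ∃ y, y = star x * x := ⟨_, rfl⟩
  have hysa : IsSelfAdjoint y := hy ▸ IsSelfAdjoint.star_mul_self x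
  rw [← hy]
  obtain ⟨r, hr⟩ : ∃ r, r = cfcₙ g y := ⟨_, rfl⟩
  have hrsa : IsSelfAdjoint r := hr ▸ cfcₙ_predicate g y
  have hid : cfcₙ (fun t : ℝ => t) y = y := cfcₙ_id' ℝ y
  have c1 : Continuous (fun t : ℝ => t) := continuous_id
  have c2 : Continuous (fun t : ℝ => t * t) := c1.mul c1
  have c3 : Continuous (fun t : ℝ => t * t * g t) := c2.mul hgc
  have c4 : Continuous (fun t : ℝ => g t * t) := hgc.mul c1
  have c5 : Continuous (fun t : ℝ => g t * t * t) := c4.mul c1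
  have c6 : Continuous (fun t : ℝ => g t * t * (t * t * g t)) := c4.mul c3
  have z3 : (0 : ℝ) * 0 * g 0 = 0 := by rw [zero_mul, zero_mul]
  have z4 : g 0 * (0 : ℝ) = 0 := mul_zero _
  have z5 : g 0 * (0 : ℝ) * 0 = 0 := mul_zero _
  have z6 : g 0 * (0 : ℝ) * (0 * 0 * g 0) = 0 := by rw [z4, zero_mul]
  have h1 : y * y * r = cfcₙ (fun t : ℝ => t * t * g t) y := by
    rw [cfcₙ_mul (fun t : ℝ => t * t) g y c2.continuousOn (mul_zero _) hgc.continuousOn hg0,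
      cfcₙ_mul (fun t : ℝ => t) (fun t => t) y c1.continuousOn rfl c1.continuousOn rfl, hid, hr]
  have h4 : r * y = cfcₙ (fun t : ℝ => g t * t) y := by
    rw [cfcₙ_mul g (fun t => t) y hgc.continuousOn hg0 c1.continuousOn rfl, hid, hr]
  have h2 : r * y * y = cfcₙ (fun t : ℝ => g t * t * t) y := by
    rw [cfcₙ_mul (fun t : ℝ => g t * t) (fun t => t) y c4.continuousOn z4 c1.continuousOn rfl,
      hid, h4]
  have h3 : r * y * (y * y * r) = cfcₙ (fun t : ℝ => g t * t * (t * t * g t)) y := by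
    rw [cfcₙ_mul (fun t : ℝ => g t * t) (fun t => t * t * g t) y c4.continuousOn z4
      c3.continuousOn z3, h1, h4]
  rw [cfcₙ_sub (fun t : ℝ => t - t * t * g t) (fun t => g t * t * t - g t * t * (t * t * g t)) y
      (c1.sub c3).continuousOn (by simp only [z3, sub_zero]) (c5.sub c6).continuousOn
      (by simp only [z5, z6, sub_zero]),
    cfcₙ_sub (fun t : ℝ => t) (fun t => t * t * g t) y c1.continuousOn rfl c3.continuousOn z3,
    cfcₙ_sub (fun t : ℝ => g t * t * t) (fun t => g t * t * (t * t * g t)) y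
      c5.continuousOn z5 c6.continuousOn z6,
    ← h1, ← h2, ← h3, hid, ← hr]
  have e : star (x - x * y * r) = star x - r * y * star x := by
    rw [star_sub, star_mul, star_mul, hrsa.star_eq, hysa.star_eq, mul_assoc]
  have e1 : star x * (x - x * y * r) = y - y * y * r := by
    rw [mul_sub, ← mul_assoc, ← mul_assoc, ← hy]
  rw [e, sub_mul, mul_assoc (r * y), e1, mul_sub]

lemma aux_cube {A : Type*} [NonUnitalCStarAlgebra A] [PartialOrder A] [StarOrderedRing A]
    (K : Set A) (hK : IsClosedTwoSidedIdeal K) (x : A) (hx : x * (star x * x) ∈ K) : x ∈ K := by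
  obtain ⟨hcl, -, -, -, hmul⟩ := hK
  rw [← hcl.closure_eq, Metric.mem_closure_iff]
  intro e he
  set y := star x * x with hy
  have hy0 : 0 ≤ y := star_mul_self_nonneg x
  have hysa : IsSelfAdjoint y := hy0.isSelfAdjoint
  set η : ℝ := e ^ 2 / 2 with hη
  have hη0 : 0 < η := by positivity
  set g : ℝ → ℝ := fun t => t / (t ^ 2 + η ^ 2) with hg
  have hgc : Continuous g := by
    apply Continuous.div (by fun_prop) (by fun_prop)
    intro t; positivity
  have hg0 : g 0 = 0 := by simp [hg]
  set r := cfcₙ g y with hr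
  have hrsa : IsSelfAdjoint r := cfcₙ_predicate g y
  refine ⟨x * y * r, (hmul r _ hx).2, ?_⟩
  have key := aux_key x g hgc hg0
  rw [← hy, ← hr] at key
  have hb : ‖star (x - x * y * r) * (x - x * y * r)‖ ≤ η := by
    rw [key]
    apply norm_cfcₙ_le
    intro t ht
    have ht0 : 0 ≤ t := quasispectrum_nonneg_of_nonneg y hy0 t ht
    have hp : 0 < t ^ 2 + η ^ 2 := by positivity
    have : (t - t * t * g t) - (g t * t * t - g t * t * (t * t * g t))
        = t * η ^ 4 / (t ^ 2 + η ^ 2) ^ 2 := by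
      simp only [hg]; field_simp; ring
    rw [this, Real.norm_of_nonneg (by positivity), div_le_iff₀ (by positivity)]
    have : t * η ^ 3 ≤ (t ^ 2 + η ^ 2) ^ 2 := by
      have h1 : 0 ≤ η ^ 2 * (t - η) ^ 2 := by positivity
      have h2 : 0 ≤ t * η ^ 3 := by positivity
      have h3 : 0 ≤ t ^ 4 := by positivity
      have h4 : 0 ≤ t ^ 2 * η ^ 2 := by positivity
      nlinarith
    nlinarith
  rw [CStarRing.norm_star_mul_self] at hb
  rw [dist_eq_norm]
  by_contra hcon
  push Not at hcon
  nlinarith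

lemma aux_cut {A : Type*} [NonUnitalCStarAlgebra A] [PartialOrder A] [StarOrderedRing A]
    (R : Set A) (hR : IsClosedTwoSidedIdeal R) (a x : A) (ha : 0 ≤ a) (hx : x ∈ R)
    (l : ℝ) (hl : 0 < l) (hax : ‖a - x‖ < l) : cfcₙ (fun t : ℝ => max (t - l) 0) a ∈ R := by
  obtain ⟨hcl, h0, hadd, hneg, hmul⟩ := hR
  have hasa : IsSelfAdjoint a := ha.isSelfAdjoint
  set g : ℝ → ℝ := fun t => t / max (l ^ 2) (t ^ 2) with hg
  have hmax : ∀ t : ℝ, 0 < max (l ^ 2) (t ^ 2) := fun t => lt_max_of_lt_left (by positivity)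
  have hgc : Continuous g :=
    Continuous.div (by fun_prop) (by fun_prop) (fun t => (hmax t).ne')
  have hg0 : g 0 = 0 := by simp [hg]
  set f : ℝ → ℝ := fun t => max (t - l) 0 with hf
  have hfc : Continuous f := by fun_prop
  have hf0 : f 0 = 0 := by simp [hf, hl.le]
  set b := cfcₙ f a with hb
  set k := cfcₙ g a with hk
  have hid : cfcₙ (fun t : ℝ => t) a = a := cfcₙ_id' ℝ a
  have hbak : b * a * k = b := by
    have : b * a * k = cfcₙ (fun t : ℝ => f t * t * g t) a := by
      rw [cfcₙ_mul (fun t : ℝ => f t * t) g a, cfcₙ_mul f (fun t => t) a, hid]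
    rw [this, hb]
    congr 1
    funext t
    simp only [hf, hg]
    rcases le_total t l with h | h
    · simp [h]
    · have : l ^ 2 ≤ t ^ 2 := by gcongr
      have ht : 0 < t := by linarith
      rw [max_eq_right this]
      field_simp
  have hkn : ‖k‖ ≤ 1 / l := by
    apply norm_cfcₙ_le
    intro t ht
    simp only [hg]
    rw [norm_div, Real.norm_of_nonneg (hmax t).le, Real.norm_eq_abs, div_le_div_iff₀ (hmax t) hl]
    rcases le_total |t| l with h | h
    · have := le_max_left (l ^ 2) (t ^ 2)
      nlinarith
    · have := le_max_right (l ^ 2) (t ^ 2)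
      have h2 := sq_abs t
      nlinarith [abs_nonneg t]
  set c := (a - x) * k with hc
  have hcn : ‖c‖ < 1 := by
    calc ‖c‖ ≤ ‖a - x‖ * ‖k‖ := norm_mul_le _ _
      _ ≤ ‖a - x‖ * (1 / l) := by gcongr
      _ < 1 := by rw [mul_one_div, div_lt_one hl]; exact hax
  have hstep : b - b * c ∈ R := by
    have : b - b * c = b * x * k := by
      rw [hc, sub_mul, mul_sub, ← mul_assoc, ← mul_assoc, hbak]; abel
    rw [this]
    exact (hmul k _ (hmul b x hx).1).2
  have hiter : ∀ n : ℕ, ∃ z : A, b - z ∈ R ∧ ‖z‖ ≤ ‖b‖ * ‖c‖ ^ n := by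
    intro n
    induction n with
    | zero => exact ⟨b, by simpa using h0, by simp⟩
    | succ n ih =>
      obtain ⟨z, hz, hzn⟩ := ih
      refine ⟨z * c, ?_, ?_⟩
      · have := hadd _ hstep _ (hmul c _ hz).2
        convert this using 1
        rw [sub_mul]; abel
      · calc ‖z * c‖ ≤ ‖z‖ * ‖c‖ := norm_mul_le _ _
          _ ≤ ‖b‖ * ‖c‖ ^ n * ‖c‖ := by gcongr
          _ = _ := by ring
  choose z hz hzn using hiter
  have hz0 : Filter.Tendsto z Filter.atTop (nhds 0) := by
    apply squeeze_zero_norm hzn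
    simpa using (tendsto_pow_atTop_nhds_zero_of_lt_one (norm_nonneg c) hcn).const_mul ‖b‖
  have hlim : Filter.Tendsto (fun n => b - z n) Filter.atTop (nhds b) := by
    simpa using hz0.const_sub b
  exact hcl.mem_of_tendsto hlim (Filter.Eventually.of_forall hz)

lemma aux_rel {A : Type*} [NonUnitalCStarAlgebra A]
    (K₁ K₂ : Set A) (h1 : IsClosedTwoSidedIdeal K₁) (h2 : IsClosedTwoSidedIdeal K₂) :
    IsClosedTwoSidedIdeal (relIdeal K₂ K₁) := by
  obtain ⟨hcl, h0, hadd, hneg, hmul⟩ := h1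
  refine ⟨?_, ?_, ?_, ?_, ?_⟩
  · have : relIdeal K₂ K₁ = ⋂ a ∈ K₂, ((fun x => x * a) ⁻¹' K₁ ∩ (fun x => a * x) ⁻¹' K₁) := by
      ext x; simp [relIdeal]
    rw [this]
    exact isClosed_biInter fun a _ =>
      (hcl.preimage (by fun_prop)).inter (hcl.preimage (by fun_prop))
  · intro a _; simpa using h0
  · intro x hx y hy a ha
    rw [add_mul, mul_add]
    exact ⟨hadd _ (hx a ha).1 _ (hy a ha).1, hadd _ (hx a ha).2 _ (hy a ha).2⟩
  · intro x hx a ha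
    rw [neg_mul, mul_neg]
    exact ⟨hneg _ (hx a ha).1, hneg _ (hx a ha).2⟩
  · intro y x hx
    have h2m := h2.2.2.2.2
    refine ⟨fun a ha => ⟨?_, ?_⟩, fun a ha => ⟨?_, ?_⟩⟩
    · rw [mul_assoc]; exact (hmul y _ (hx a ha).1).1
    · rw [← mul_assoc]; exact (hx _ (h2m y a ha).2).2
    · rw [mul_assoc]; exact (hx _ (h2m y a ha).1).1
    · rw [← mul_assoc]; exact (hmul y _ (hx a ha).2).2

lemma aux_gen {A : Type*} [NonUnitalCStarAlgebra A] (a : A) :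
    IsClosedTwoSidedIdeal (closedIdealGen a) := by
  refine ⟨isClosed_sInter fun S hS => hS.1.1, fun S hS => hS.1.2.1, ?_, ?_, ?_⟩
  · exact fun x hx y hy S hS => hS.1.2.2.1 x (hx S hS) y (hy S hS)
  · exact fun x hx S hS => hS.1.2.2.2.1 x (hx S hS)
  · exact fun y x hx => ⟨fun S hS => (hS.1.2.2.2.2 y x (hx S hS)).1,
      fun S hS => (hS.1.2.2.2.2 y x (hx S hS)).2⟩

lemma aux_closure {A : Type*} [NonUnitalCStarAlgebra A] (T : Set A)
    (h0 : (0 : A) ∈ T) (hadd : ∀ x ∈ T, ∀ y ∈ T, x + y ∈ T) (hneg : ∀ x ∈ T, -x ∈ T)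
    (hmul : ∀ a : A, ∀ x ∈ T, a * x ∈ T ∧ x * a ∈ T) :
    IsClosedTwoSidedIdeal (closure T) := by
  refine ⟨isClosed_closure, subset_closure h0, ?_, ?_, ?_⟩
  · exact fun x hx y hy => map_mem_closure₂ continuous_add hx hy hadd
  · exact fun x hx => map_mem_closure continuous_neg hx hneg
  · exact fun y x hx => ⟨map_mem_closure (f := fun x => y * x) (by fun_prop) hx
      fun x hx => (hmul y x hx).1, map_mem_closure (f := fun x => x * y) (by fun_prop) hx
      fun x hx => (hmul y x hx).2⟩

lemma aux_sum {A : Type*} [NonUnitalCStarAlgebra A] {ι : Type*} (K : ι → Set A)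
    (hK : ∀ l, IsClosedTwoSidedIdeal (K l)) :
    IsClosedTwoSidedIdeal (closure {x : A | ∃ (s : Finset ι) (f : ι → A),
        (∀ l ∈ s, f l ∈ K l) ∧ x = ∑ l ∈ s, f l}) := by
  classical
  apply aux_closure
  · exact ⟨∅, 0, by simp, by simp⟩
  · rintro _ ⟨s, f, hf, rfl⟩ _ ⟨t, g, hg, rfl⟩
    refine ⟨s ∪ t, fun l => (if l ∈ s then f l else 0) + (if l ∈ t then g l else 0), ?_, ?_⟩
    · intro l _
      apply (hK l).2.2.1
      · split_ifs with h
        · exact hf l h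
        · exact (hK l).2.1
      · split_ifs with h
        · exact hg l h
        · exact (hK l).2.1
    · rw [Finset.sum_add_distrib, Finset.sum_ite_mem, Finset.sum_ite_mem,
        Finset.union_inter_cancel_left, Finset.union_inter_cancel_right]
  · rintro _ ⟨s, f, hf, rfl⟩
    exact ⟨s, fun l => - f l, fun l hl => (hK l).2.2.2.1 _ (hf l hl), by simp⟩
  · rintro y _ ⟨s, f, hf, rfl⟩
    exact ⟨⟨s, fun l => y * f l, fun l hl => ((hK l).2.2.2.2 y _ (hf l hl)).1, Finset.mul_sum ..⟩,
      ⟨s, fun l => f l * y, fun l hl => ((hK l).2.2.2.2 y _ (hf l hl)).2, Finset.sum_mul ..⟩⟩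

lemma aux_approx {A : Type*} [NonUnitalCStarAlgebra A] [PartialOrder A] [StarOrderedRing A]
    (a : A) (ha : 0 ≤ a) (l : ℝ) (hl : 0 < l) :
    ‖a - cfcₙ (fun t : ℝ => max (t - l) 0) a‖ ≤ l := by
  have hasa : IsSelfAdjoint a := ha.isSelfAdjoint
  have hid : cfcₙ (fun t : ℝ => t) a = a := cfcₙ_id' ℝ a
  have : a - cfcₙ (fun t : ℝ => max (t - l) 0) a = cfcₙ (fun t : ℝ => t - max (t - l) 0) a := by
    rw [cfcₙ_sub (fun t : ℝ => t) (fun t => max (t - l) 0) a (by fun_prop) (by simp)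
      (by fun_prop) (by simp [hl.le]), hid]
  rw [this]
  apply norm_cfcₙ_le
  intro t ht
  have ht0 : 0 ≤ t := quasispectrum_nonneg_of_nonneg a ha t ht
  rw [Real.norm_eq_abs, abs_le]
  rcases le_total (t - l) 0 with h | h
  · rw [max_eq_right h]; constructor <;> linarith
  · rw [max_eq_left h]; constructor <;> linarith

/-- If `J ⋐ I` is a compact containment of ideals and `a ∈ I` is a full positive element,
then there is `λ > 0` such that for all ideals `K₁ ⊊ K₂ ⊆ J`, the image of `a` in
`A/K₂^{K₁}` has norm at least `λ` (the quotient norm being the distance to `K₂^{K₁}`). -/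
theorem exists_uniform_lower_bound_of_compactly_contained
    {A : Type*} [NonUnitalCStarAlgebra A] [PartialOrder A] [StarOrderedRing A]
    (J I : Set A) (hJ : IsClosedTwoSidedIdeal J) (hI : IsClosedTwoSidedIdeal I)
    (hJI : J ⊆ I) (hcpt : IsCompactlyContained J I)
    (a : A) (ha : 0 ≤ a) (haI : a ∈ I) (hfull : closedIdealGen a = I) :
    ∃ lam : ℝ, 0 < lam ∧
      ∀ K₁ K₂ : Set A, IsClosedTwoSidedIdeal K₁ → IsClosedTwoSidedIdeal K₂ →
        K₁ ⊂ K₂ → K₂ ⊆ J → lam ≤ Metric.infDist a (relIdeal K₂ K₁) := by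
  let lm : ULift ℕ → ℝ := fun n => 1 / ((n.down : ℝ) + 1)
  have hlm : ∀ n, 0 < lm n := fun n => by positivity
  let b : ULift ℕ → A := fun n => cfcₙ (fun t : ℝ => max (t - lm n) 0) a
  let K : ULift ℕ → Set A := fun n => closedIdealGen (b n)
  have hK : ∀ n, IsClosedTwoSidedIdeal (K n) := fun n => aux_gen _
  have hbK : ∀ n, b n ∈ K n := fun n S hS => hS.2
  obtain ⟨s, hs⟩ := hcpt K hK (by
    rw [← hfull]
    apply Set.sInter_subset_of_mem
    refine ⟨aux_sum K hK, ?_⟩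
    rw [Metric.mem_closure_iff]
    intro e he
    obtain ⟨n, hn⟩ := exists_nat_one_div_lt he
    refine ⟨b ⟨n⟩, ⟨{⟨n⟩}, b, fun l _ => hbK l, by simp⟩, ?_⟩
    rw [dist_eq_norm]
    exact (aux_approx a ha _ (hlm ⟨n⟩)).trans_lt hn)
  let N : ULift ℕ := ⟨s.sup ULift.down⟩
  refine ⟨lm N, hlm N, ?_⟩
  intro K₁ K₂ h1 h2 h12 h2J
  by_contra hcon
  push Not at hcon
  have hR := aux_rel K₁ K₂ h1 h2
  obtain ⟨x, hx, hax⟩ := (Metric.infDist_lt_iff ⟨0, hR.2.1⟩).1 hcon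
  rw [dist_eq_norm] at hax
  have hKR : ∀ n ∈ s, K n ⊆ relIdeal K₂ K₁ := by
    intro n hn
    apply Set.sInter_subset_of_mem
    refine ⟨hR, aux_cut _ hR a x ha hx _ (hlm n) (hax.trans_le ?_)⟩
    have : n.down ≤ s.sup ULift.down := Finset.le_sup (f := ULift.down) hn
    have : (n.down : ℝ) ≤ ((s.sup ULift.down : ℕ) : ℝ) := by exact_mod_cast this
    simp only [lm, N]
    gcongr
  have hJR : J ⊆ relIdeal K₂ K₁ := by
    intro y hy
    obtain ⟨f, hf, rfl⟩ := hs hy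
    exact Finset.sum_induction f (· ∈ relIdeal K₂ K₁) (fun x y hx hy => hR.2.2.1 x hx y hy)
      hR.2.1 (fun l hl => hKR l hl (hf l hl))
  apply h12.2
  intro y hy
  apply aux_cube K₁ h1
  exact (hJR (h2J (h2.2.2.2.2 (star y) y hy).1) y hy).2
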